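/- Let K be an n×n real symmetric matrix with 0 ⪯ K ⪯ λI for some λ ∈ [0,1), and let L = K(I−K)^{−1}. Define μ(T) = det(L_{T,T})/det(I+L) for T ⊆ [n] (with det of the empty matrix 1), the DPP with ensemble matrix L, and define ν(T) = ∏_{i∈T} K_{ii} · ∏_{i∉T} (1−K_{ii}), the product-Bernoulli distribution with success probabilities K_{ii}. Then for every T ⊆ [n], μ(T) ≤ (1−λ)^{−|T|}·ν(T). -/

import Mathlib

open Finset Matrix

/-!
Since `1 + L = (1 - K)⁻¹`, the DPP gives `T` the mass `det L_{T,T} * det (1 - K)`, and Hadamard's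
inequality bounds the two determinants by `∏ i ∈ T, L i i` and `∏ i, (1 - K i i)`. The
identity `K - (1 - λ) L = L (λ - K)`, whose right side is a product of commuting positive
semidefinite matrices, gives `(1 - λ) L ≤ K` in the Loewner order, hence
`L i i ≤ (1 - λ)⁻¹ K i i`. Finally the factors `1 - K i i` with `i ∈ T` are at most one.
-/

section EnsembleMatrix

variable {ι R : Type*} [Fintype ι] [DecidableEq ι] [CommRing R]

/-- The ensemble matrix `L = K (1 - K)⁻¹` of the determinantal point process with marginal
kernel `K`. It is meaningful only when `1 - K` is invertible, since `⁻¹` is zero otherwise. -/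
noncomputable def ensembleMatrix (K : Matrix ι ι R) : Matrix ι ι R :=
  K * (1 - K)⁻¹

theorem ensembleMatrix_mul_one_sub {K : Matrix ι ι R} (h : IsUnit (1 - K)) :
    ensembleMatrix K * (1 - K) = K :=
  nonsing_inv_mul_cancel_right _ _ ((isUnit_iff_isUnit_det _).mp h)

theorem one_add_ensembleMatrix {K : Matrix ι ι R} (h : IsUnit (1 - K)) :
    1 + ensembleMatrix K = (1 - K)⁻¹ := by
  have hinv : (1 - K) * (1 - K)⁻¹ = 1 :=
    mul_nonsing_inv _ ((isUnit_iff_isUnit_det _).mp h)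
  calc 1 + ensembleMatrix K = (1 - K) * (1 - K)⁻¹ + K * (1 - K)⁻¹ := by
        rw [hinv, ensembleMatrix]
    _ = (1 - K)⁻¹ := by rw [← add_mul, sub_add_cancel, one_mul]

theorem commute_self_one_sub_inv (K : Matrix ι ι R) : Commute K (1 - K)⁻¹ := by
  simpa only [Matrix.zpow_neg_one] using
    Matrix.Commute.zpow_right ((Commute.one_right K).sub_right (Commute.refl K)) (-1)

theorem commute_ensembleMatrix_self (K : Matrix ι ι R) : Commute (ensembleMatrix K) K :=
  (Commute.refl K).mul_left (commute_self_one_sub_inv K).symm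

end EnsembleMatrix

section SubsetMass

variable {ι R F : Type*} [DecidableEq ι] [CommRing R] [Field F]

/-- The principal minor `det L_{T,T}`; it equals one for empty `T`. -/
def principalMinor (L : Matrix ι ι R) (T : Finset ι) : R :=
  (L.submatrix (fun i : {x // x ∈ T} => (i : ι)) (fun j : {x // x ∈ T} => (j : ι))).det

variable [Fintype ι]

/-- The probability `ν(T)` of the subset `T` when each `i` is included independently with
probability `p i`. -/
def bernoulliMass (p : ι → R) (T : Finset ι) : R :=
  (∏ i ∈ T, p i) * ∏ i ∈ Tᶜ, (1 - p i)

/-- The probability `μ(T) = det L_{T,T} / det (1 + L)` of the subset `T` under the determinantal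
point process with ensemble matrix `L`. -/
noncomputable def dppMass (L : Matrix ι ι F) (T : Finset ι) : F :=
  principalMinor L T / (1 + L).det

theorem dppMass_ensembleMatrix {K : Matrix ι ι F} (h : IsUnit (1 - K)) (T : Finset ι) :
    dppMass (ensembleMatrix K) T = principalMinor (ensembleMatrix K) T * (1 - K).det := by
  rw [dppMass, one_add_ensembleMatrix h, det_nonsing_inv, Ring.inverse_eq_inv', div_inv_eq_mul]

end SubsetMass

section Hadamard

open scoped ComplexOrder

variable {ι 𝕜 : Type*} [Fintype ι] [DecidableEq ι] [RCLike 𝕜]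

theorem det_le_one_of_posSemidef_of_diag_eq_one {A : Matrix ι ι 𝕜} (hA : A.PosSemidef)
    (hdiag : ∀ i, A i i = 1) : A.det ≤ 1 := by
  have htrace : ∑ i, hA.isHermitian.eigenvalues i = ∑ _i : ι, (1 : ℝ) := by
    have h := hA.isHermitian.trace_eq_sum_eigenvalues
    simp only [trace, diag_apply, hdiag] at h
    exact_mod_cast h.symm
  have hprod : ∏ i, hA.isHermitian.eigenvalues i ≤ 1 :=
    calc ∏ i, hA.isHermitian.eigenvalues i
        ≤ ∏ i, Real.exp (hA.isHermitian.eigenvalues i - 1) :=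
          prod_le_prod (fun i _ => hA.eigenvalues_nonneg i) fun i _ => by
            linarith [Real.add_one_le_exp (hA.isHermitian.eigenvalues i - 1)]
      _ = 1 := by rw [← Real.exp_sum, sum_sub_distrib, htrace, sub_self, Real.exp_zero]
  rw [hA.isHermitian.det_eq_prod_eigenvalues]
  exact_mod_cast hprod

theorem det_eq_zero_of_posSemidef_of_diag_eq_zero {A : Matrix ι ι 𝕜} (hA : A.PosSemidef)
    {i : ι} (hi : A i i = 0) : A.det = 0 := by
  have hker : A *ᵥ Pi.single i 1 = 0 :=
    (hA.dotProduct_mulVec_zero_iff _).mp (by simp [hi])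
  exact exists_mulVec_eq_zero_iff.mp ⟨Pi.single i 1, by simp, hker⟩

theorem det_le_prod_diag_of_posSemidef_of_diag_pos {A : Matrix ι ι 𝕜} (hA : A.PosSemidef)
    (hpos : ∀ i, 0 < A i i) : A.det ≤ ∏ i, A i i := by
  -- Conjugating by the inverse square roots of the diagonal entries makes the diagonal one.
  obtain ⟨s, hs⟩ : ∃ s : ι → ℝ, ∀ i, A i i = (s i : 𝕜) * s i :=
    ⟨fun i => √(RCLike.re (A i i)), fun i => by
      obtain ⟨hre, him⟩ := RCLike.pos_iff.mp (hpos i)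
      rw [← RCLike.ofReal_mul, Real.mul_self_sqrt hre.le]
      exact RCLike.ext (by simp) (by simpa using him)⟩
  have hs0 : ∀ i, (s i : 𝕜) ≠ 0 := fun i h => (hpos i).ne' (by rw [hs, h, zero_mul])
  let D : Matrix ι ι 𝕜 := diagonal fun i => (s i : 𝕜)⁻¹
  have hD : Dᴴ = D := by
    simp only [D, diagonal_conjTranspose]
    congr 1
    ext i
    simp
  have hB : (D * A * D).PosSemidef := by
    simpa only [hD] using hA.mul_mul_conjTranspose_same D
  have hBdiag : ∀ i, (D * A * D) i i = 1 := fun i => by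
    simp only [D, mul_diagonal, diagonal_mul, hs]
    field_simp [hs0 i]
  have hBdet : (D * A * D).det = A.det / ∏ i, A i i := by
    simp only [D, det_mul, det_diagonal, hs, prod_mul_distrib, prod_inv_distrib]
    field_simp
  have hle := det_le_one_of_posSemidef_of_diag_eq_one hB hBdiag
  rwa [hBdet, div_le_one₀ (prod_pos fun i _ => hpos i)] at hle

theorem det_le_prod_diag_of_posSemidef {A : Matrix ι ι 𝕜} (hA : A.PosSemidef) :
    A.det ≤ ∏ i, A i i := by
  by_cases hzero : ∃ i, A i i = 0
  · obtain ⟨i, hi⟩ := hzero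
    rw [det_eq_zero_of_posSemidef_of_diag_eq_zero hA hi]
    exact prod_nonneg fun j _ => hA.diag_nonneg
  · push Not at hzero
    exact det_le_prod_diag_of_posSemidef_of_diag_pos hA fun i =>
      hA.diag_nonneg.lt_of_ne' (hzero i)

end Hadamard

section LoewnerBounds

open scoped ComplexOrder MatrixOrder

variable {ι 𝕜 : Type*} [DecidableEq ι] [RCLike 𝕜]

theorem principalMinor_le_prod_diag {A : Matrix ι ι 𝕜} (hA : A.PosSemidef) (T : Finset ι) :
    principalMinor A T ≤ ∏ i ∈ T, A i i :=
  (det_le_prod_diag_of_posSemidef (hA.submatrix _)).trans_eq (prod_coe_sort T fun i => A i i)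

theorem posDef_one_sub_of_le_smul_one {K : Matrix ι ι 𝕜} {lam : 𝕜} (hlam : lam < 1)
    (hK : K ≤ lam • 1) : (1 - K).PosDef := by
  have hsplit : 1 - K = (1 - lam) • (1 : Matrix ι ι 𝕜) + (lam • 1 - K) := by
    rw [sub_smul, one_smul, sub_add_sub_cancel]
  rw [hsplit]
  exact (PosDef.one.smul (sub_pos.mpr hlam)).add_posSemidef hK

variable [Fintype ι]

theorem ensembleMatrix_nonneg {K : Matrix ι ι 𝕜} (hK0 : 0 ≤ K) (hK1 : K ≤ 1) :
    0 ≤ ensembleMatrix K :=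
  (commute_self_one_sub_inv K).mul_nonneg hK0 (le_iff.mp hK1).inv.nonneg

theorem one_sub_smul_ensembleMatrix_le {K : Matrix ι ι 𝕜} {lam : 𝕜} (hK0 : 0 ≤ K)
    (hK1 : (1 - K).PosDef) (hK : K ≤ lam • 1) : (1 - lam) • ensembleMatrix K ≤ K := by
  have hcomm : Commute (ensembleMatrix K) (lam • 1 - K) :=
    ((Commute.one_right _).smul_right lam).sub_right (commute_ensembleMatrix_self K)
  have hident : K - (1 - lam) • ensembleMatrix K = ensembleMatrix K * (lam • 1 - K) := by
    calc K - (1 - lam) • ensembleMatrix K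
        = ensembleMatrix K * (1 - K) - (1 - lam) • ensembleMatrix K := by
          rw [ensembleMatrix_mul_one_sub hK1.isUnit]
      _ = ensembleMatrix K * (lam • 1 - K) := by
          rw [mul_sub, mul_sub, mul_smul_comm, mul_one]
          module
  rw [← sub_nonneg, hident]
  exact hcomm.mul_nonneg (ensembleMatrix_nonneg hK0 hK1.posSemidef) (sub_nonneg.mpr hK)

theorem ensembleMatrix_diag_le {K : Matrix ι ι 𝕜} {lam : 𝕜} (hlam : lam < 1) (hK0 : 0 ≤ K)
    (hK : K ≤ lam • 1) (i : ι) : ensembleMatrix K i i ≤ (1 - lam)⁻¹ * K i i := by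
  have hle := one_sub_smul_ensembleMatrix_le hK0 (posDef_one_sub_of_le_smul_one hlam hK) hK
  rw [le_inv_mul_iff₀ (sub_pos.mpr hlam)]
  simpa using (le_iff.mp hle).diag_nonneg (i := i)

theorem principalMinor_ensembleMatrix_le {K : Matrix ι ι 𝕜} {lam : 𝕜} (hlam : lam < 1)
    (hK0 : 0 ≤ K) (hK : K ≤ lam • 1) (T : Finset ι) :
    principalMinor (ensembleMatrix K) T ≤ (1 - lam)⁻¹ ^ T.card * ∏ i ∈ T, K i i := by
  have hK1 : (1 - K).PosDef := posDef_one_sub_of_le_smul_one hlam hK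
  have hL : (ensembleMatrix K).PosSemidef :=
    (ensembleMatrix_nonneg hK0 hK1.posSemidef).posSemidef
  calc principalMinor (ensembleMatrix K) T ≤ ∏ i ∈ T, ensembleMatrix K i i :=
        principalMinor_le_prod_diag hL T
    _ ≤ ∏ i ∈ T, (1 - lam)⁻¹ * K i i :=
        prod_le_prod (fun _ _ => hL.diag_nonneg) fun i _ => ensembleMatrix_diag_le hlam hK0 hK i
    _ = (1 - lam)⁻¹ ^ T.card * ∏ i ∈ T, K i i := by rw [prod_mul_distrib, prod_const]

theorem det_one_sub_le_prod {K : Matrix ι ι 𝕜} (hK0 : 0 ≤ K) (hK1 : K ≤ 1) (s : Finset ι) :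
    (1 - K).det ≤ ∏ i ∈ s, (1 - K i i) := by
  have hdiag : ∀ i, 0 ≤ 1 - K i i := fun i => by simpa using (le_iff.mp hK1).diag_nonneg (i := i)
  calc (1 - K).det ≤ ∏ i, (1 - K i i) := by
        simpa using det_le_prod_diag_of_posSemidef (le_iff.mp hK1)
    _ ≤ ∏ i ∈ s, (1 - K i i) :=
        prod_le_prod_of_subset_of_le_one (subset_univ s) (fun i _ => hdiag i) fun i _ _ =>
          sub_le_self 1 hK0.posSemidef.diag_nonneg

theorem dpp_bernoulli_rejection_ratio_bound_general {K : Matrix ι ι 𝕜} {lam : 𝕜}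
    (hlam : lam < 1) (hK0 : 0 ≤ K) (hK : K ≤ lam • 1) (T : Finset ι) :
    dppMass (ensembleMatrix K) T ≤ (1 - lam)⁻¹ ^ T.card * bernoulliMass (fun i => K i i) T := by
  have hK1 : (1 - K).PosDef := posDef_one_sub_of_le_smul_one hlam hK
  have hinv : 0 ≤ (1 - lam)⁻¹ := inv_nonneg.mpr (sub_pos.mpr hlam).le
  have hprod : 0 ≤ ∏ i ∈ T, K i i := prod_nonneg fun _ _ => hK0.posSemidef.diag_nonneg
  rw [dppMass_ensembleMatrix hK1.isUnit, bernoulliMass, ← mul_assoc]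
  exact mul_le_mul (principalMinor_ensembleMatrix_le hlam hK0 hK T)
    (det_one_sub_le_prod hK0 hK1.posSemidef Tᶜ) hK1.det_pos.le
    (mul_nonneg (pow_nonneg hinv _) hprod)

end LoewnerBounds

/-- Rejection-sampling ratio bound for a spectrally bounded symmetric DPP
against its product-Bernoulli proposal: with `0 ⪯ K ⪯ λI`, `λ < 1`, `L = K(I−K)⁻¹`,
`μ(T) = det(L_{T,T})/det(I+L)` and `ν(T) = ∏_{i∈T} K_{ii} · ∏_{i∉T}(1−K_{ii})`, we have
`μ(T) ≤ (1−λ)^{−|T|}·ν(T)` for every `T ⊆ [n]`. -/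
theorem dpp_bernoulli_rejection_ratio_bound (n : ℕ)
    (K : Matrix (Fin n) (Fin n) ℝ)
    (lam : ℝ) (hlam : lam ∈ Set.Ico (0 : ℝ) 1)
    (hK0 : K.PosSemidef)
    (hKlam : ((lam • (1 : Matrix (Fin n) (Fin n) ℝ)) - K).PosSemidef)
    (L : Matrix (Fin n) (Fin n) ℝ) (hL : L = K * (1 - K)⁻¹)
    (μ ν : Finset (Fin n) → ℝ)
    (hμ : ∀ T : Finset (Fin n), μ T =
      (L.submatrix (fun i : {x // x ∈ T} => (i : Fin n))
        (fun j : {x // x ∈ T} => (j : Fin n))).det / (1 + L).det)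
    (hν : ∀ T : Finset (Fin n), ν T =
      (∏ i ∈ T, K i i) * ∏ i ∈ Tᶜ, (1 - K i i)) :
    ∀ T : Finset (Fin n), μ T ≤ (1 - lam)⁻¹ ^ T.card * ν T := by
  intro T
  rw [hμ, hν, hL]
  exact dpp_bernoulli_rejection_ratio_bound_general hlam.2 hK0.nonneg hKlam T
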